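/- Let N ≥ 2, let Ω ⊂ ℝ^N be a bounded open set, and let p satisfy 2 < p < 2N/(N−2) if N ≥ 3 and 2 < p < ∞ if N = 2. Let β : ℝ → ℝ be continuous with β(s) ≥ 0 for all s, and let K > 0. Then there exists a constant C > 0 such that for every ε ∈ (0,1] and every function u that is Lipschitz on the closure of Ω, twice continuously differentiable on Ω, vanishes on the boundary ∂Ω, satisfies Δu(x) = (1/ε)β((u(x)−1)/ε) − (u(x)−1)_+^{p−1} for all x ∈ Ω, and satisfies ∫_Ω |∇u|² dx ≤ K, one has u(x) ≤ C for all x ∈ Ω. -/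

import Mathlib

open MeasureTheory Metric Set

/-- The Laplacian: sum of second partial derivatives. -/
noncomputable def lap {N : ℕ} (u : EuclideanSpace ℝ (Fin N) → ℝ)
    (x : EuclideanSpace ℝ (Fin N)) : ℝ :=
  ∑ i : Fin N, fderiv ℝ (fun y => fderiv ℝ u y (EuclideanSpace.single i 1)) x
    (EuclideanSpace.single i 1)

/-!
Since `β ≥ 0`, the function `u` satisfies the differential inequality `-u₊ ^ (p - 1) ≤ Δ u`, in
which `ε` no longer appears. A convex truncation `f` of `u` above level `1`, extended by zero,
satisfies a similar inequality on the whole space, with no larger Dirichlet energy, so the Sobolev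
inequality bounds `∫ f ^ q` for a suitable `q` by a constant depending on `K`. If `M = max f` is
large, then `Δ f ≥ -Λ M` with `Λ` of order `M ^ (p - 2)`, and the mean value inequality on a ball of
radius `Λ ^ (-1 / 2)` around a maximum point yields
`M ^ q ≤ C Λ ^ (n / 2) ∫ f ^ q`, of order `M ^ (n (p - 2) / 2)`. Subcriticality of `p` allows
`q > n (p - 2) / 2`, which bounds `M`.
-/

open Module InnerProductSpace Laplacian Topology Gradient

section SmoothRamp

/-- A convex `C²` substitute for the positive part `t ↦ max t 0`: the primitive of
`Real.smoothTransition` that vanishes on `(-∞, 0]`. It truncates functions and, composed with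
`1 - ‖y‖²`, provides the kernels of the weighted averages. -/
noncomputable def smoothRamp (t : ℝ) : ℝ := ∫ s in (0 : ℝ)..t, Real.smoothTransition s

theorem hasDerivAt_smoothRamp (t : ℝ) : HasDerivAt smoothRamp (Real.smoothTransition t) t :=
  (Real.smoothTransition.continuous.integral_hasStrictDerivAt 0 t).hasDerivAt

theorem deriv_smoothRamp : deriv smoothRamp = Real.smoothTransition :=
  funext fun t => (hasDerivAt_smoothRamp t).deriv

theorem contDiff_smoothRamp : ContDiff ℝ 2 smoothRamp := by
  rw [← one_add_one_eq_two, contDiff_succ_iff_deriv, deriv_smoothRamp]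
  exact ⟨fun t => (hasDerivAt_smoothRamp t).differentiableAt, by simp,
    Real.smoothTransition.contDiff (n := 1)⟩

theorem smoothRamp_of_nonpos {t : ℝ} (ht : t ≤ 0) : smoothRamp t = 0 := by
  have hzero : ∀ s ∈ uIcc 0 t, Real.smoothTransition s = 0 := fun s hs =>
    Real.smoothTransition.zero_of_nonpos (uIcc_of_ge ht ▸ hs).2
  simp [smoothRamp, intervalIntegral.integral_congr hzero]

theorem smoothRamp_nonneg (t : ℝ) : 0 ≤ smoothRamp t := by
  rcases le_total t 0 with ht | ht
  · exact (smoothRamp_of_nonpos ht).ge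
  · exact intervalIntegral.integral_nonneg ht fun s _ => Real.smoothTransition.nonneg s

theorem sub_one_le_smoothRamp (t : ℝ) : t - 1 ≤ smoothRamp t := by
  rcases le_total t 1 with ht | ht
  · linarith [smoothRamp_nonneg t]
  have hii (a b : ℝ) : IntervalIntegrable Real.smoothTransition volume a b :=
    Real.smoothTransition.continuous.intervalIntegrable a b
  have htail : ∫ s in (1 : ℝ)..t, Real.smoothTransition s = t - 1 := by
    have hone : ∀ s ∈ uIcc 1 t, Real.smoothTransition s = 1 := fun s hs =>
      Real.smoothTransition.one_of_one_le (uIcc_of_le ht ▸ hs).1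
    simp [intervalIntegral.integral_congr hone]
  calc t - 1 ≤ smoothRamp 1 + ∫ s in (1 : ℝ)..t, Real.smoothTransition s := by
        linarith [smoothRamp_nonneg 1]
    _ = smoothRamp t := intervalIntegral.integral_add_adjacent_intervals (hii 0 1) (hii 1 t)

theorem smoothRamp_le_smoothTransition {t : ℝ} (ht : t ≤ 1) :
    smoothRamp t ≤ Real.smoothTransition t := by
  rcases le_total t 0 with h0 | h0
  · exact (smoothRamp_of_nonpos h0).trans_le (Real.smoothTransition.nonneg t)
  calc smoothRamp t ≤ ∫ _ in (0 : ℝ)..t, Real.smoothTransition t :=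
        intervalIntegral.integral_mono_on h0
          (Real.smoothTransition.continuous.intervalIntegrable 0 t) intervalIntegrable_const
          fun s hs => Real.smoothTransition.monotone hs.2
    _ = t * Real.smoothTransition t := by simp
    _ ≤ Real.smoothTransition t := mul_le_of_le_one_left (Real.smoothTransition.nonneg t) ht

end SmoothRamp

section LaplacianCalculus

theorem norm_gradient_eq_norm_fderiv {E : Type*} [NormedAddCommGroup E] [InnerProductSpace ℝ E]
    [CompleteSpace E] (u : E → ℝ) (x : E) : ‖∇ u x‖ = ‖fderiv ℝ u x‖ := by
  simp [gradient]

variable {E F : Type*} [NormedAddCommGroup E] [InnerProductSpace ℝ E] [FiniteDimensional ℝ E]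
  [NormedAddCommGroup F] [NormedSpace ℝ F]

theorem continuous_laplacian {f : E → F} (hf : ContDiff ℝ 2 f) : Continuous (Δ f) := by
  rw [laplacian_eq_iteratedFDeriv_stdOrthonormalBasis]
  have := hf.continuous_iteratedFDeriv (m := 2) le_rfl
  fun_prop

theorem laplacian_eq_sum_fderiv_fderiv {ι : Type*} [Fintype ι] (b : OrthonormalBasis ι ℝ E)
    {f : E → F} {x : E} (hf : ContDiffAt ℝ 2 f x) :
    Δ f x = ∑ i, fderiv ℝ (fun y => fderiv ℝ f y (b i)) x (b i) := by
  have hdf : DifferentiableAt ℝ (fderiv ℝ f) x :=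
    (hf.fderiv_right (m := 1) le_rfl).differentiableAt one_ne_zero
  rw [laplacian_eq_iteratedFDeriv_orthonormalBasis f b]
  refine Finset.sum_congr rfl fun i _ => ?_
  simp [iteratedFDeriv_two_apply, fderiv_clm_apply hdf (differentiableAt_const (b i))]

theorem lap_eq_laplacian {N : ℕ} {u : EuclideanSpace ℝ (Fin N) → ℝ}
    {x : EuclideanSpace ℝ (Fin N)} (hu : ContDiffAt ℝ 2 u x) : lap u x = Δ u x := by
  simp [lap, laplacian_eq_sum_fderiv_fderiv (EuclideanSpace.basisFun (Fin N) ℝ) hu]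

theorem laplacian_comp_add_smul {f : E → F} (hf : ContDiff ℝ 2 f) (x : E) (r : ℝ) (y : E) :
    Δ (fun z => f (x + r • z)) y = r ^ 2 • Δ f (x + r • y) := by
  have hfx : ContDiff ℝ 2 fun z => f (x + z) := hf.comp (contDiff_const.add contDiff_id)
  simp [laplacian_eq_iteratedFDeriv_stdOrthonormalBasis, iteratedFDeriv_comp_const_smul r hfx,
    iteratedFDeriv_comp_add_left, Finset.smul_sum]

theorem laplacian_comp {g : ℝ → ℝ} {u : E → ℝ} {x : E} (hg : ContDiff ℝ 2 g)
    (hu : ContDiffAt ℝ 2 u x) :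
    Δ (g ∘ u) x = deriv (deriv g) (u x) * ‖∇ u x‖ ^ 2 + deriv g (u x) * Δ u x := by
  let b := stdOrthonormalBasis ℝ E
  have hdg : Differentiable ℝ (deriv g) :=
    (hg.iterate_deriv' 1 1).differentiable one_ne_zero
  have hux : DifferentiableAt ℝ u x := hu.differentiableAt two_ne_zero
  have hpartial (i) : DifferentiableAt ℝ (fun y => fderiv ℝ u y (b i)) x :=
    ((hu.fderiv_right (m := 1) le_rfl).differentiableAt one_ne_zero).clm_apply
      (differentiableAt_const _)
  have hfirst (i) : (fun y => fderiv ℝ (g ∘ u) y (b i)) =ᶠ[𝓝 x]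
      fun y => deriv g (u y) * fderiv ℝ u y (b i) := by
    filter_upwards [hu.eventually (by simp)] with y hy
    have hgu := (hg.differentiable two_ne_zero (u y)).hasDerivAt.comp_hasFDerivAt y
      (hy.differentiableAt two_ne_zero).hasFDerivAt
    simp [hgu.fderiv]
  have hsecond (i) : fderiv ℝ (fun y => fderiv ℝ (g ∘ u) y (b i)) x (b i) =
      deriv (deriv g) (u x) * ‖⟪b i, ∇ u x⟫_ℝ‖ ^ 2 +
        deriv g (u x) * fderiv ℝ (fun y => fderiv ℝ u y (b i)) x (b i) := by
    have hprod := ((hdg (u x)).hasDerivAt.comp_hasFDerivAt x hux.hasFDerivAt).mul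
      (hpartial i).hasFDerivAt
    rw [(hprod.congr_of_eventuallyEq (hfirst i)).fderiv]
    simp [inner_gradient_right]
    ring
  rw [laplacian_eq_sum_fderiv_fderiv b (hg.contDiffAt.comp x hu),
    laplacian_eq_sum_fderiv_fderiv b hu]
  simp only [hsecond, Finset.sum_add_distrib, ← Finset.mul_sum, b.sum_sq_norm_inner_right]

end LaplacianCalculus

section WeightedAverage

theorem integrable_mul_continuous {X : Type*} [TopologicalSpace X] [MeasurableSpace X]
    [OpensMeasurableSpace X] {μ : Measure X} [IsFiniteMeasureOnCompacts μ] {w f : X → ℝ}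
    (hw : Continuous w) (hws : HasCompactSupport w) (hf : Continuous f) :
    Integrable (fun x => w x * f x) μ :=
  (hw.mul hf).integrable_of_hasCompactSupport hws.mul_right

theorem hasDerivAt_integral_mul_comp_add_smul {E : Type*} [NormedAddCommGroup E]
    [NormedSpace ℝ E] [MeasurableSpace E] [OpensMeasurableSpace E] {μ : Measure E}
    [IsFiniteMeasureOnCompacts μ] {w f : E → ℝ} (hw : Continuous w) (hws : HasCompactSupport w)
    (hf : ContDiff ℝ 1 f) (x : E) (r : ℝ) :
    HasDerivAt (fun s : ℝ => ∫ y, w y * f (x + s • y) ∂μ)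
      (∫ y, w y * fderiv ℝ f (x + r • y) y ∂μ) r := by
  have := hf.continuous
  have : Continuous (fderiv ℝ f) := hf.continuous_fderiv one_ne_zero
  obtain ⟨M, hM⟩ := (isCompact_Icc (a := r - 1) (b := r + 1)).prod hws
    |>.exists_bound_of_continuousOn
      (f := fun q : ℝ × E => fderiv ℝ f (x + q.1 • q.2) q.2) (by fun_prop)
  have hbound (y : E) : ∀ s ∈ Icc (r - 1) (r + 1),
      ‖w y * fderiv ℝ f (x + s • y) y‖ ≤ ‖w y‖ * M := by
    intro s hs
    by_cases hy : y ∈ tsupport w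
    · rw [norm_mul]
      exact mul_le_mul_of_nonneg_left (hM (s, y) ⟨hs, hy⟩) (norm_nonneg _)
    · simp [image_eq_zero_of_notMem_tsupport hy]
  refine (hasDerivAt_integral_of_dominated_loc_of_deriv_le
    (F := fun (s : ℝ) y => w y * f (x + s • y))
    (F' := fun (s : ℝ) y => w y * fderiv ℝ f (x + s • y) y) (bound := fun y => ‖w y‖ * M)
    (Icc_mem_nhds (sub_one_lt r) (lt_add_one r))
    (.of_forall fun s => Continuous.aestronglyMeasurable (by fun_prop))
    (integrable_mul_continuous hw hws (by fun_prop))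
    (Continuous.aestronglyMeasurable (by fun_prop)) (.of_forall hbound)
    (integrable_mul_continuous hw.norm hws.norm continuous_const)
    (.of_forall fun y s _ => ?_)).2
  have hline : HasDerivAt (fun s : ℝ => x + s • y) y s := by
    simpa using ((hasDerivAt_id s).smul_const y).const_add x
  exact ((hf.differentiable one_ne_zero _).hasFDerivAt.comp_hasDerivAt s hline).const_mul (w y)

variable {E : Type*} [NormedAddCommGroup E]

/-- A smooth radial weight supported in the closed unit ball, used to average functions over
balls. -/
noncomputable def ballWeight (y : E) : ℝ := Real.smoothTransition (1 - ‖y‖ ^ 2)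

/-- The radial potential, supported in the closed unit ball, whose gradient at `y` is
`-ballWeight y • y`. It converts the derivative of a weighted average with respect to the radius
into an integral of the Laplacian. -/
noncomputable def ballPotential (y : E) : ℝ := smoothRamp (1 - ‖y‖ ^ 2) / 2

theorem continuous_ballWeight : Continuous (ballWeight : E → ℝ) :=
  Real.smoothTransition.continuous.comp (by fun_prop)

theorem ballWeight_nonneg (y : E) : 0 ≤ ballWeight y := Real.smoothTransition.nonneg _

theorem ballWeight_le_one (y : E) : ballWeight y ≤ 1 := Real.smoothTransition.le_one _

theorem ballPotential_nonneg (y : E) : 0 ≤ ballPotential y :=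
  div_nonneg (smoothRamp_nonneg _) zero_le_two

theorem ballPotential_le (y : E) : ballPotential y ≤ ballWeight y / 2 :=
  div_le_div_of_nonneg_right (smoothRamp_le_smoothTransition (by linarith [sq_nonneg ‖y‖]))
    zero_le_two

theorem one_sub_norm_sq_nonpos {y : E} (hy : y ∉ closedBall (0 : E) 1) : 1 - ‖y‖ ^ 2 ≤ 0 := by
  have : 1 < ‖y‖ := by simpa using hy
  nlinarith

variable [InnerProductSpace ℝ E]

theorem contDiff_ballPotential : ContDiff ℝ 2 (ballPotential : E → ℝ) :=
  (contDiff_smoothRamp.comp (contDiff_const.sub (contDiff_norm_sq ℝ))).div_const 2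

variable [FiniteDimensional ℝ E]

theorem hasCompactSupport_ballWeight : HasCompactSupport (ballWeight : E → ℝ) :=
  HasCompactSupport.intro (isCompact_closedBall 0 1) fun _ hy =>
    Real.smoothTransition.zero_of_nonpos (one_sub_norm_sq_nonpos hy)

theorem hasCompactSupport_ballPotential : HasCompactSupport (ballPotential : E → ℝ) :=
  HasCompactSupport.intro (isCompact_closedBall 0 1) fun _ hy => by
    simp [ballPotential, smoothRamp_of_nonpos (one_sub_norm_sq_nonpos hy)]

theorem gradient_ballPotential (y : E) : ∇ ballPotential y = -ballWeight y • y := by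
  have hinner : HasFDerivAt (fun z : E => 1 - ‖z‖ ^ 2) (-(2 • innerSL ℝ y)) y :=
    (hasStrictFDerivAt_norm_sq y).hasFDerivAt.const_sub 1
  have hramp := ((hasDerivAt_smoothRamp (1 - ‖y‖ ^ 2)).div_const 2).comp_hasFDerivAt y hinner
  refine HasGradientAt.gradient (hramp.congr_fderiv ?_)
  ext v
  simp [ballWeight]
  ring

variable [MeasurableSpace E] [BorelSpace E] {μ : Measure E}

theorem integral_mul_laplacian_eq_neg_integral_inner_gradient [μ.IsAddHaarMeasure] {h g : E → ℝ}
    (hh : ContDiff ℝ 1 h) (hhs : HasCompactSupport h) (hg : ContDiff ℝ 2 g) :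
    ∫ y, h y * Δ g y ∂μ = -∫ y, ⟪∇ h y, ∇ g y⟫_ℝ ∂μ := by
  let b := stdOrthonormalBasis ℝ E
  have hg₁ (i) : ContDiff ℝ 1 fun y => fderiv ℝ g y (b i) :=
    (hg.fderiv_right (m := 1) le_rfl).clm_apply contDiff_const
  have hg₂ (i) : Continuous fun y => fderiv ℝ (fun z => fderiv ℝ g z (b i)) y (b i) :=
    ((hg₁ i).continuous_fderiv one_ne_zero).clm_apply continuous_const
  have hh₁ (i) : Continuous fun y => fderiv ℝ h y (b i) :=
    (hh.continuous_fderiv one_ne_zero).clm_apply continuous_const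
  have hh₁s (i) : HasCompactSupport fun y => fderiv ℝ h y (b i) :=
    (hhs.fderiv (𝕜 := ℝ)).comp_left (g := fun l : E →L[ℝ] ℝ => l (b i)) (zero_apply _)
  have hhg₂ (i) := integrable_mul_continuous (μ := μ) hh.continuous hhs (hg₂ i)
  have hh₁g₁ (i) := integrable_mul_continuous (μ := μ) (hh₁ i) (hh₁s i) (hg₁ i).continuous
  have hparts (i) : ∫ y, h y * fderiv ℝ (fun z => fderiv ℝ g z (b i)) y (b i) ∂μ =
      -∫ y, fderiv ℝ h y (b i) * fderiv ℝ g y (b i) ∂μ :=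
    integral_mul_fderiv_eq_neg_fderiv_mul_of_integrable (hh₁g₁ i) (hhg₂ i)
      (integrable_mul_continuous hh.continuous hhs (hg₁ i).continuous)
      (fun y _ => hh.differentiable one_ne_zero y)
      fun y _ => (hg₁ i).differentiable one_ne_zero y
  have hinner (y : E) : ⟪∇ h y, ∇ g y⟫_ℝ = ∑ i, fderiv ℝ h y (b i) * fderiv ℝ g y (b i) := by
    rw [← b.sum_inner_mul_inner]
    exact Finset.sum_congr rfl fun i _ => by simp
  simp only [laplacian_eq_sum_fderiv_fderiv b hg.contDiffAt, hinner, Finset.mul_sum]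
  rw [integral_finsetSum _ fun i _ => hhg₂ i, integral_finsetSum _ fun i _ => hh₁g₁ i,
    ← Finset.sum_neg_distrib]
  exact Finset.sum_congr rfl fun i _ => hparts i

variable [μ.IsAddHaarMeasure]

theorem integral_ballWeight_pos : 0 < ∫ y : E, ballWeight y ∂μ :=
  continuous_ballWeight.integral_pos_of_hasCompactSupport_nonneg_nonzero
    hasCompactSupport_ballWeight ballWeight_nonneg (x := 0) (by simp [ballWeight])

theorem integral_ballWeight_mul_fderiv {f : E → ℝ} (hf : ContDiff ℝ 2 f) (x : E) {r : ℝ}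
    (hr : r ≠ 0) :
    ∫ y, ballWeight y * fderiv ℝ f (x + r • y) y ∂μ =
      r * ∫ y, ballPotential y * Δ f (x + r • y) ∂μ := by
  have hfr : ContDiff ℝ 2 fun z => f (x + r • z) := hf.comp (by fun_prop)
  have hgreen := integral_mul_laplacian_eq_neg_integral_inner_gradient (μ := μ)
    (contDiff_ballPotential.of_le one_le_two) hasCompactSupport_ballPotential hfr
  have hfd (y : E) : fderiv ℝ (fun z => f (x + r • z)) y y = r * fderiv ℝ f (x + r • y) y := by
    rw [fderiv_comp_smul (f := fun z => f (x + z)), fderiv_comp_add_left]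
    rfl
  have hinner (y : E) : ⟪∇ ballPotential y, ∇ (fun z => f (x + r • z)) y⟫_ℝ =
      -(r * (ballWeight y * fderiv ℝ f (x + r • y) y)) := by
    rw [gradient_ballPotential, real_inner_smul_left, real_inner_comm, inner_gradient_left, hfd]
    ring
  simp only [laplacian_comp_add_smul hf, hinner, smul_eq_mul, mul_left_comm _ (r ^ 2),
    integral_const_mul, integral_neg, neg_neg] at hgreen
  refine mul_left_cancel₀ hr (hgreen.symm.trans ?_)
  ring

theorem mean_value_inequality {f : E → ℝ} (hf : ContDiff ℝ 2 f) {m : ℝ} (hm : 0 ≤ m)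
    (hΔ : ∀ y, -m ≤ Δ f y) (x : E) {R : ℝ} (hR : 0 ≤ R) :
    (∫ y : E, ballWeight y ∂μ) * f x ≤
      ∫ y, ballWeight y * f (x + R • y) ∂μ + R ^ 2 / 4 * m * ∫ y : E, ballWeight y ∂μ := by
  let c := ∫ y : E, ballWeight y ∂μ
  let Φ : ℝ → ℝ := fun r => ∫ y, ballWeight y * f (x + r • y) ∂μ + r ^ 2 / 4 * m * c
  have hΦ (r : ℝ) : HasDerivAt Φ
      (∫ y, ballWeight y * fderiv ℝ f (x + r • y) y ∂μ + r / 2 * m * c) r := by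
    have hsq : HasDerivAt (fun r : ℝ => r ^ 2 / 4 * m * c) (r / 2 * m * c) r := by
      refine ((((hasDerivAt_pow 2 r).div_const 4).mul_const m).mul_const c).congr_deriv ?_
      simp only [Nat.cast_ofNat, Nat.add_one_sub_one, pow_one]
      ring
    exact (hasDerivAt_integral_mul_comp_add_smul continuous_ballWeight
      hasCompactSupport_ballWeight (hf.of_le one_le_two) x r).add hsq
  have hpot (r : ℝ) : -(m * (c / 2)) ≤ ∫ y, ballPotential y * Δ f (x + r • y) ∂μ := by
    rw [← integral_div, ← integral_const_mul, ← integral_neg]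
    refine integral_mono ?_ ?_ fun y => ?_
    · exact (((continuous_ballWeight.integrable_of_hasCompactSupport
        hasCompactSupport_ballWeight).div_const 2).const_mul m).neg
    · exact integrable_mul_continuous contDiff_ballPotential.continuous
        hasCompactSupport_ballPotential ((continuous_laplacian hf).comp (by fun_prop))
    · calc -(m * (ballWeight y / 2)) ≤ ballPotential y * -m := by
            linarith [mul_le_mul_of_nonneg_left (ballPotential_le y) hm]
        _ ≤ ballPotential y * Δ f (x + r • y) :=
            mul_le_mul_of_nonneg_left (hΔ _) (ballPotential_nonneg y)
  have hmono : MonotoneOn Φ (Ici 0) := by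
    refine monotoneOn_of_deriv_nonneg (convex_Ici 0)
      (fun r _ => (hΦ r).continuousAt.continuousWithinAt)
      (fun r _ => (hΦ r).differentiableAt.differentiableWithinAt) fun r hr => ?_
    rw [interior_Ici, mem_Ioi] at hr
    rw [(hΦ r).deriv, integral_ballWeight_mul_fderiv hf x hr.ne']
    linarith [mul_le_mul_of_nonneg_left (hpot r) hr.le]
  simpa [Φ, c, integral_mul_const] using hmono self_mem_Ici (mem_Ici.2 hR) hR

end WeightedAverage

section LocalBound

theorem rpow_sub_one_mul_le_add {s t q : ℝ} (hs : 0 ≤ s) (ht : 0 < t) (hq : 1 ≤ q) :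
    t ^ (q - 1) * s ≤ t ^ q + s ^ q := by
  rcases le_total s t with hst | hts
  · calc t ^ (q - 1) * s ≤ t ^ (q - 1) * t := by gcongr
      _ = t ^ q := by rw [← Real.rpow_add_one ht.ne', sub_add_cancel]
      _ ≤ t ^ q + s ^ q := le_add_of_nonneg_right (Real.rpow_nonneg hs q)
  · calc t ^ (q - 1) * s ≤ s ^ (q - 1) * s := by gcongr
      _ = s ^ q := by rw [← Real.rpow_add_one (ht.trans_le hts).ne', sub_add_cancel]
      _ ≤ t ^ q + s ^ q := le_add_of_nonneg_left (Real.rpow_nonneg ht.le q)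

variable {E : Type*} [NormedAddCommGroup E] [InnerProductSpace ℝ E] [FiniteDimensional ℝ E]
  [MeasurableSpace E] [BorelSpace E] {μ : Measure E} [μ.IsAddHaarMeasure]

theorem integrable_ballWeight_mul_comp_add_smul {φ : E → ℝ} (hφ : Integrable φ μ) (x : E) {R : ℝ}
    (hR : R ≠ 0) : Integrable (fun y => ballWeight y * φ (x + R • y)) μ :=
  ((hφ.comp_add_left x).comp_smul hR).bdd_mul (c := 1) continuous_ballWeight.aestronglyMeasurable
    (.of_forall fun y => by
      simpa [abs_of_nonneg (ballWeight_nonneg y)] using ballWeight_le_one y)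

theorem integral_ballWeight_mul_comp_add_smul_le {φ : E → ℝ} (hφ₀ : ∀ y, 0 ≤ φ y)
    (hφ : Integrable φ μ) (x : E) {R : ℝ} (hR : 0 < R) :
    ∫ y, ballWeight y * φ (x + R • y) ∂μ ≤ (R ^ finrank ℝ E)⁻¹ * ∫ y, φ y ∂μ :=
  calc ∫ y, ballWeight y * φ (x + R • y) ∂μ ≤ ∫ y, φ (x + R • y) ∂μ :=
        integral_mono (integrable_ballWeight_mul_comp_add_smul hφ x hR.ne')
          ((hφ.comp_add_left x).comp_smul hR.ne')
          fun y => mul_le_of_le_one_left (hφ₀ _) (ballWeight_le_one y)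
    _ = (R ^ finrank ℝ E)⁻¹ * ∫ y, φ y ∂μ := by
        rw [Measure.integral_comp_smul_of_nonneg μ (fun y => φ (x + y)) R (hR := hR.le),
          integral_add_left_eq_self φ x, smul_eq_mul]

theorem rpow_mul_integral_ballWeight_mul_comp_add_smul_le {f : E → ℝ} (hf : Continuous f)
    (hf₀ : ∀ y, 0 ≤ f y) {q t : ℝ} (hq : 1 ≤ q) (ht : 0 < t)
    (hfq : Integrable (fun y => f y ^ q) μ) (x : E) {R : ℝ} (hR : 0 < R) :
    t ^ (q - 1) * ∫ y, ballWeight y * f (x + R • y) ∂μ ≤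
      t ^ q * ∫ y : E, ballWeight y ∂μ + (R ^ finrank ℝ E)⁻¹ * ∫ y, f y ^ q ∂μ := by
  have hw : Integrable (fun y : E => t ^ q * ballWeight y) μ :=
    (continuous_ballWeight.integrable_of_hasCompactSupport hasCompactSupport_ballWeight).const_mul _
  have hwf : Integrable (fun y => t ^ (q - 1) * (ballWeight y * f (x + R • y))) μ :=
    (integrable_mul_continuous continuous_ballWeight hasCompactSupport_ballWeight
      (by fun_prop)).const_mul _
  have hwfq : Integrable (fun y => ballWeight y * f (x + R • y) ^ q) μ :=
    integrable_ballWeight_mul_comp_add_smul hfq x hR.ne'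
  calc t ^ (q - 1) * ∫ y, ballWeight y * f (x + R • y) ∂μ
      = ∫ y, t ^ (q - 1) * (ballWeight y * f (x + R • y)) ∂μ := (integral_const_mul _ _).symm
    _ ≤ ∫ y, (t ^ q * ballWeight y + ballWeight y * f (x + R • y) ^ q) ∂μ := by
        refine integral_mono hwf (hw.add hwfq) fun y => ?_
        have := mul_le_mul_of_nonneg_left (rpow_sub_one_mul_le_add (hf₀ (x + R • y)) ht hq)
          (ballWeight_nonneg y)
        simp only
        linarith
    _ = t ^ q * ∫ y : E, ballWeight y ∂μ + ∫ y, ballWeight y * f (x + R • y) ^ q ∂μ := by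
        rw [integral_add hw hwfq, integral_const_mul]
    _ ≤ _ := by
        gcongr
        exact integral_ballWeight_mul_comp_add_smul_le (fun y => Real.rpow_nonneg (hf₀ y) q) hfq x
          hR

/- The mean value inequality on the ball of radius `Λ ^ (-1 / 2)` loses only a quarter of `f x` to
the negative part of the Laplacian; comparing the average of `f` with that of `f ^ q` at the level
`f x / 4` loses another quarter. -/
theorem rpow_le_mul_integral_rpow {f : E → ℝ} (hf : ContDiff ℝ 2 f) (hf₀ : ∀ y, 0 ≤ f y) {q : ℝ}
    (hq : 1 ≤ q) (hfq : Integrable (fun y => f y ^ q) μ) {Λ : ℝ} (hΛ : 0 < Λ) {x : E}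
    (hx : 0 < f x) (hΔ : ∀ y, -(Λ * f x) ≤ Δ f y) :
    f x ^ q ≤ 4 ^ q / (2 * ∫ y : E, ballWeight y ∂μ) * Λ ^ (finrank ℝ E / 2 : ℝ) *
      ∫ y, f y ^ q ∂μ := by
  set c := ∫ y : E, ballWeight y ∂μ
  have hc : 0 < c := integral_ballWeight_pos
  obtain ⟨t, ht, hxt⟩ : ∃ t, 0 < t ∧ f x = 4 * t := ⟨f x / 4, by positivity, by ring⟩
  let R := Λ ^ (-1 / 2 : ℝ)
  have hR : 0 < R := Real.rpow_pos_of_pos hΛ _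
  have hR₂ : R ^ 2 * Λ = 1 := by
    rw [← Real.rpow_mul_natCast hΛ.le, ← Real.rpow_add_one hΛ.ne']
    norm_num
  have hRn : (R ^ finrank ℝ E)⁻¹ = Λ ^ (finrank ℝ E / 2 : ℝ) := by
    rw [← Real.rpow_mul_natCast hΛ.le, ← Real.rpow_neg hΛ.le]
    ring_nf
  have hmean : 3 * (t * c) ≤ ∫ y, ballWeight y * f (x + R • y) ∂μ := by
    have := mean_value_inequality (μ := μ) hf (by positivity) hΔ x hR.le
    rw [hxt] at this
    linear_combination this + t * c * hR₂
  have hmain : 2 * c * t ^ q ≤ Λ ^ (finrank ℝ E / 2 : ℝ) * ∫ y, f y ^ q ∂μ := by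
    have hyoung := rpow_mul_integral_ballWeight_mul_comp_add_smul_le (μ := μ) hf.continuous hf₀
      hq ht hfq x hR
    have htq : t ^ (q - 1) * t = t ^ q := by rw [← Real.rpow_add_one ht.ne', sub_add_cancel]
    rw [hRn] at hyoung
    linear_combination mul_le_mul_of_nonneg_left hmean (Real.rpow_nonneg ht.le (q - 1)) + hyoung -
      3 * c * htq
  calc f x ^ q = 4 ^ q / (2 * c) * (2 * c * t ^ q) := by
        rw [hxt, Real.mul_rpow (by norm_num) ht.le]
        field_simp
    _ ≤ 4 ^ q / (2 * c) * (Λ ^ (finrank ℝ E / 2 : ℝ) * ∫ y, f y ^ q ∂μ) := by gcongr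
    _ = _ := by ring

end LocalBound

section Sobolev

open scoped NNReal ENNReal

theorem exists_sobolev_exponents {n : ℕ} (hn : 2 ≤ n) {p : ℝ}
    (hp : 3 ≤ n → p < 2 * (n : ℝ) / ((n : ℝ) - 2)) :
    ∃ a q : ℝ≥0, 1 ≤ a ∧ a ≤ 2 ∧ a < (n : ℝ≥0) ∧ 1 ≤ q ∧ (n : ℝ) * (p - 2) / 2 < q ∧
      (a : ℝ)⁻¹ - (n : ℝ)⁻¹ ≤ (q : ℝ)⁻¹ := by
  rcases hn.eq_or_lt with rfl | hn
  · -- The Sobolev conjugate of `2` is infinite in the plane, so take the `a < 2` whose conjugate is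
    -- `max p 2`.
    have hq : 2 ≤ max p 2 := le_max_right p 2
    have hpq : p ≤ max p 2 := le_max_left p 2
    generalize max p 2 = q at hq hpq
    have ha₁ : 1 ≤ 2 * q / (q + 2) := by rw [le_div_iff₀ (by linarith)]; linarith
    have ha₂ : 2 * q / (q + 2) < 2 := by rw [div_lt_iff₀ (by linarith)]; linarith
    have haq : (2 * q / (q + 2))⁻¹ - 2⁻¹ ≤ q⁻¹ := by field_simp; linarith
    lift q to ℝ≥0 using by linarith
    refine ⟨2 * q / (q + 2), q, mod_cast ha₁, mod_cast ha₂.le, mod_cast ha₂, ?_, ?_, ?_⟩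
    · exact_mod_cast one_le_two.trans hq
    · push_cast; linarith
    · exact_mod_cast haq
  · have hn₂ : (0 : ℝ) < n - 2 := by
      have : (3 : ℝ) ≤ n := mod_cast hn
      linarith
    have hq₁ : 1 ≤ 2 * (n : ℝ) / (n - 2) := by rw [le_div_iff₀ hn₂]; linarith
    have hpq : (n : ℝ) * (p - 2) / 2 < 2 * n / (n - 2) := by
      have := hp hn
      rw [lt_div_iff₀ hn₂] at this ⊢
      nlinarith
    have haq : (2 : ℝ)⁻¹ - (n : ℝ)⁻¹ ≤ (2 * (n : ℝ) / (n - 2))⁻¹ := by field_simp; linarith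
    exact ⟨2, ⟨2 * n / (n - 2), by linarith⟩, one_le_two, le_rfl, mod_cast hn, hq₁, hpq, haq⟩

theorem hasCompactSupport_of_support_subset {X Y : Type*} [PseudoMetricSpace X] [ProperSpace X]
    [Zero Y] {s : Set X} (hs : Bornology.IsBounded s) {f : X → Y} (hfs : f.support ⊆ s) :
    HasCompactSupport f :=
  hs.isCompact_closure.of_isClosed_subset (isClosed_tsupport f) (closure_mono hfs)

theorem eLpNorm_le_rpow_measure_mul_eLpNorm {X G : Type*} [MeasurableSpace X] {μ : Measure X}
    [NormedAddCommGroup G] {a b : ℝ≥0∞} (hab : a ≤ b) {g : X → G}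
    (hg : AEStronglyMeasurable g μ) {s : Set X} (hgs : ∀ x ∉ s, g x = 0) :
    eLpNorm g a μ ≤ μ s ^ (1 / a.toReal - 1 / b.toReal) * eLpNorm g b μ := by
  have hsupp : g.support ⊆ s := fun x hx => by_contra fun hxs => hx (hgs x hxs)
  have := eLpNorm_le_eLpNorm_mul_rpow_measure_univ hab (hg.restrict (s := s))
  rwa [eLpNorm_restrict_eq_of_support_subset hsupp, eLpNorm_restrict_eq_of_support_subset hsupp,
    Measure.restrict_apply_univ, mul_comm] at this

variable {E F : Type*} [NormedAddCommGroup E] [NormedSpace ℝ E] [FiniteDimensional ℝ E]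
  [MeasurableSpace E] [BorelSpace E] [NormedAddCommGroup F] [NormedSpace ℝ F]
  [FiniteDimensional ℝ F] {μ : Measure E} [μ.IsAddHaarMeasure] {s : Set E}

theorem exists_eLpNorm_le_mul_eLpNorm_fderiv (hs : Bornology.IsBounded s) {a b q : ℝ≥0}
    (ha : 1 ≤ a) (hab : a ≤ b) (han : a < finrank ℝ E)
    (haq : (a : ℝ)⁻¹ - (finrank ℝ E : ℝ)⁻¹ ≤ (q : ℝ)⁻¹) :
    ∃ C : ℝ≥0, ∀ f : E → F, ContDiff ℝ 1 f → f.support ⊆ s →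
      eLpNorm f q μ ≤ C * eLpNorm (fderiv ℝ f) b μ := by
  let V : ℝ≥0∞ := μ (closure s) ^ (1 / (a : ℝ) - 1 / (b : ℝ))
  have hV : V ≠ ∞ := by
    refine ENNReal.rpow_ne_top_of_nonneg (sub_nonneg.2 ?_) hs.closure.measure_lt_top.ne
    exact one_div_le_one_div_of_le (by positivity) (mod_cast hab)
  refine ⟨eLpNormLESNormFDerivOfLeConst F μ s a q * V.toNNReal, fun f hf hfs => ?_⟩
  have hholder : eLpNorm (fderiv ℝ f) a μ ≤ V * eLpNorm (fderiv ℝ f) b μ :=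
    eLpNorm_le_rpow_measure_mul_eLpNorm (ENNReal.coe_le_coe.2 hab)
      (hf.continuous_fderiv one_ne_zero).aestronglyMeasurable
      fun x hx => fderiv_of_notMem_tsupport ℝ fun h => hx (closure_mono hfs h)
  calc eLpNorm f q μ ≤ eLpNormLESNormFDerivOfLeConst F μ s a q * eLpNorm (fderiv ℝ f) a μ :=
        eLpNorm_le_eLpNorm_fderiv_of_le μ hf hfs ha han haq hs
    _ ≤ eLpNormLESNormFDerivOfLeConst F μ s a q * (V * eLpNorm (fderiv ℝ f) b μ) := by gcongr
    _ = _ := by rw [ENNReal.coe_mul, ENNReal.coe_toNNReal hV, mul_assoc]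

theorem exists_integral_rpow_le_of_integral_sq_fderiv_le (hs : Bornology.IsBounded s)
    {a q : ℝ≥0} (ha : 1 ≤ a) (ha₂ : a ≤ 2) (han : a < finrank ℝ E) (hq : 0 < q)
    (haq : (a : ℝ)⁻¹ - (finrank ℝ E : ℝ)⁻¹ ≤ (q : ℝ)⁻¹) (K : ℝ) :
    ∃ D : ℝ, ∀ f : E → F, ContDiff ℝ 1 f → f.support ⊆ s →
      ∫ x, ‖fderiv ℝ f x‖ ^ 2 ∂μ ≤ K → ∫ x, ‖f x‖ ^ (q : ℝ) ∂μ ≤ D := by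
  obtain ⟨C, hC⟩ := exists_eLpNorm_le_mul_eLpNorm_fderiv (F := F) (μ := μ) hs ha ha₂ han haq
  refine ⟨(C * √K) ^ (q : ℝ), fun f hf hfs hK => ?_⟩
  have hfc : HasCompactSupport f := hasCompactSupport_of_support_subset hs hfs
  have hd : Continuous (fderiv ℝ f) := hf.continuous_fderiv one_ne_zero
  have hdmem : MemLp (fderiv ℝ f) (2 : ℝ≥0) μ :=
    hd.memLp_of_hasCompactSupport (hfc.fderiv (𝕜 := ℝ))
  have hnorm : lpNorm f q μ ≤ C * lpNorm (fderiv ℝ f) (2 : ℝ≥0) μ := by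
    rw [← toReal_eLpNorm hf.continuous.aestronglyMeasurable,
      ← toReal_eLpNorm hdmem.aestronglyMeasurable, ← ENNReal.coe_toReal, ← ENNReal.toReal_mul]
    exact ENNReal.toReal_mono (ENNReal.mul_ne_top ENNReal.coe_ne_top hdmem.eLpNorm_ne_top)
      (hC f hf hfs)
  rw [lpNorm_nnreal_eq_integral_norm_rpow hq.ne' hf.continuous.aestronglyMeasurable,
    lpNorm_nnreal_eq_integral_norm_rpow two_ne_zero hdmem.aestronglyMeasurable,
    Real.rpow_inv_le_iff_of_pos (by positivity) (by positivity) (mod_cast hq)] at hnorm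
  simp only [NNReal.coe_ofNat, Real.rpow_ofNat, ← one_div, ← Real.sqrt_eq_rpow] at hnorm
  exact hnorm.trans (by gcongr)

end Sobolev

section CompactlySupportedBound

theorem le_rpow_of_rpow_le_mul_rpow {m a b B : ℝ} (hm : 0 < m) (hba : b < a)
    (h : m ^ a ≤ B * m ^ b) : m ≤ B ^ (a - b)⁻¹ := by
  have hab : 0 < a - b := sub_pos.2 hba
  have hB : m ^ (a - b) ≤ B := by
    rwa [Real.rpow_sub hm, div_le_iff₀ (Real.rpow_pos_of_pos hm b)]
  rwa [Real.le_rpow_inv_iff_of_pos hm.le ((Real.rpow_nonneg hm.le _).trans hB) hab]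

variable {E : Type*} [NormedAddCommGroup E] [InnerProductSpace ℝ E] [FiniteDimensional ℝ E]
  [MeasurableSpace E] [BorelSpace E] {μ : Measure E} [μ.IsAddHaarMeasure]

theorem le_rpow_of_neg_add_rpow_le_laplacian {f : E → ℝ} (hf : ContDiff ℝ 2 f)
    (hf₀ : ∀ y, 0 ≤ f y) {p q A D : ℝ} (hp : 1 ≤ p) (hq : 1 ≤ q)
    (hpq : finrank ℝ E * (p - 2) / 2 < q) (hA : 0 < A)
    (hΔ : ∀ y, -(f y + A) ^ (p - 1) ≤ Δ f y) (hfq : Integrable (fun y => f y ^ q) μ)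
    (hD : ∫ y, f y ^ q ∂μ ≤ D) {x : E} (hmax : ∀ y, f y ≤ f x) (hAx : A ≤ f x) :
    f x ≤ (4 ^ q / (2 * ∫ y : E, ballWeight y ∂μ) * (2 ^ (p - 1)) ^ (finrank ℝ E / 2 : ℝ) * D) ^
      (q - finrank ℝ E * (p - 2) / 2)⁻¹ := by
  have hx : 0 < f x := hA.trans_le hAx
  have hc : 0 < ∫ y : E, ballWeight y ∂μ := integral_ballWeight_pos
  have hΛx : 2 ^ (p - 1) * f x ^ (p - 2) * f x = (2 * f x) ^ (p - 1) := by
    rw [mul_assoc, ← Real.rpow_add_one hx.ne', Real.mul_rpow zero_le_two hx.le]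
    ring_nf
  have hΔx (y : E) : -(2 ^ (p - 1) * f x ^ (p - 2) * f x) ≤ Δ f y := by
    refine le_trans ?_ (hΔ y)
    rw [hΛx, neg_le_neg_iff]
    exact Real.rpow_le_rpow (by linarith [hf₀ y]) (by linarith [hmax y]) (by linarith)
  have hΛn : (2 ^ (p - 1) * f x ^ (p - 2)) ^ (finrank ℝ E / 2 : ℝ) =
      (2 ^ (p - 1)) ^ (finrank ℝ E / 2 : ℝ) * f x ^ (finrank ℝ E * (p - 2) / 2) := by
    rw [Real.mul_rpow (by positivity) (by positivity), ← Real.rpow_mul hx.le]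
    ring_nf
  refine le_rpow_of_rpow_le_mul_rpow hx hpq ?_
  calc f x ^ q ≤ 4 ^ q / (2 * ∫ y : E, ballWeight y ∂μ) *
        (2 ^ (p - 1) * f x ^ (p - 2)) ^ (finrank ℝ E / 2 : ℝ) * ∫ y, f y ^ q ∂μ :=
        rpow_le_mul_integral_rpow hf hf₀ hq hfq (by positivity) hx hΔx
    _ ≤ 4 ^ q / (2 * ∫ y : E, ballWeight y ∂μ) *
        (2 ^ (p - 1) * f x ^ (p - 2)) ^ (finrank ℝ E / 2 : ℝ) * D := by gcongr
    _ = _ := by rw [hΛn]; ring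

theorem exists_forall_le_of_neg_add_rpow_le_laplacian (hE : 2 ≤ finrank ℝ E) {s : Set E}
    (hs : Bornology.IsBounded s) {p : ℝ} (hp : 1 ≤ p)
    (hp_sub : 3 ≤ finrank ℝ E → p < 2 * (finrank ℝ E : ℝ) / ((finrank ℝ E : ℝ) - 2))
    {A : ℝ} (hA : 0 < A) (K : ℝ) :
    ∃ C, ∀ f : E → ℝ, ContDiff ℝ 2 f → f.support ⊆ s → (∀ y, 0 ≤ f y) →
      (∀ y, -(f y + A) ^ (p - 1) ≤ Δ f y) → ∫ y, ‖fderiv ℝ f y‖ ^ 2 ∂μ ≤ K → ∀ y, f y ≤ C := by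
  obtain ⟨a, q, ha, ha₂, han, hq, hpq, haq⟩ := exists_sobolev_exponents hE hp_sub
  have hq₀ : 0 < q := zero_lt_one.trans_le hq
  obtain ⟨D, hD⟩ := exists_integral_rpow_le_of_integral_sq_fderiv_le (F := ℝ) (μ := μ) hs ha ha₂
    han hq₀ haq K
  refine ⟨max A ((4 ^ (q : ℝ) / (2 * ∫ y : E, ballWeight y ∂μ) *
    (2 ^ (p - 1)) ^ (finrank ℝ E / 2 : ℝ) * D) ^ (q - finrank ℝ E * (p - 2) / 2)⁻¹),
    fun f hf hfs hf₀ hΔ hK y => ?_⟩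
  have hfc : HasCompactSupport f := hasCompactSupport_of_support_subset hs hfs
  obtain ⟨x, hmax⟩ := hf.continuous.exists_forall_ge_of_hasCompactSupport hfc
  refine (hmax y).trans (le_max_iff.2 (or_iff_not_imp_left.2 fun hx => ?_))
  have hfq : Integrable (fun y => f y ^ (q : ℝ)) μ :=
    (hf.continuous.rpow_const fun _ => .inr q.coe_nonneg).integrable_of_hasCompactSupport
      (hfc.comp_left (g := fun t : ℝ => t ^ (q : ℝ))
        (Real.zero_rpow (mod_cast hq₀.ne')))
  have hDf : ∫ y, f y ^ (q : ℝ) ∂μ ≤ D := by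
    simpa only [Real.norm_of_nonneg (hf₀ _)] using hD f (hf.of_le one_le_two) hfs hK
  exact le_rpow_of_neg_add_rpow_le_laplacian hf hf₀ hp hq hpq hA hΔ hfq hDf hmax
    (le_of_not_ge hx)

end CompactlySupportedBound

section Truncation

/-- The smooth truncation of `u` above the level `c`: a `C²` substitute for `max (u - c) 0` on `s`,
extended by zero outside `s`. -/
noncomputable def smoothTruncation {X : Type*} (c : ℝ) (s : Set X) (u : X → ℝ) : X → ℝ :=
  s.indicator fun x => smoothRamp (u x - c)

theorem smoothTruncation_nonneg {X : Type*} (c : ℝ) (s : Set X) (u : X → ℝ) (x : X) :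
    0 ≤ smoothTruncation c s u x :=
  indicator_nonneg (fun _ _ => smoothRamp_nonneg _) x

theorem le_smoothTruncation_add {X : Type*} (c : ℝ) {s : Set X} (u : X → ℝ) {x : X} (hx : x ∈ s) :
    u x ≤ smoothTruncation c s u x + (c + 1) := by
  rw [smoothTruncation, indicator_of_mem hx]
  linarith [sub_one_le_smoothRamp (u x - c)]

theorem smoothTruncation_eventuallyEq {X : Type*} [TopologicalSpace X] (c : ℝ) {s : Set X}
    (hs : IsOpen s) (u : X → ℝ) {x : X} (hx : x ∈ s) :
    smoothTruncation c s u =ᶠ[𝓝 x] (fun t => smoothRamp (t - c)) ∘ u :=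
  eqOn_indicator.eventuallyEq_of_mem (hs.mem_nhds hx)

theorem tsupport_smoothTruncation_subset {X : Type*} [TopologicalSpace X] {c : ℝ} {s : Set X}
    (hs : IsOpen s) {u : X → ℝ} (hu : ContinuousOn u (closure s))
    (hfr : ∀ x ∈ frontier s, u x < c) : tsupport (smoothTruncation c s u) ⊆ s := by
  have hsub : (smoothTruncation c s u).support ⊆ closure s ∩ u ⁻¹' Ici c := by
    intro x hx
    rw [smoothTruncation, support_indicator] at hx
    refine ⟨subset_closure hx.1, not_lt.1 fun hux : u x < c => hx.2 ?_⟩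
    exact smoothRamp_of_nonpos (sub_nonpos.2 hux.le)
  intro x hx
  obtain ⟨hxs, hcx⟩ := closure_minimal hsub
    (hu.preimage_isClosed_of_isClosed isClosed_closure isClosed_Ici) hx
  by_contra hxs'
  exact (hfr x (hs.frontier_eq ▸ ⟨hxs, hxs'⟩)).not_ge hcx

theorem contDiff_of_tsupport_subset {𝕜 E F : Type*} [NontriviallyNormedField 𝕜]
    [NormedAddCommGroup E] [NormedSpace 𝕜 E] [NormedAddCommGroup F] [NormedSpace 𝕜 F]
    {n : WithTop ℕ∞} {f : E → F} {s : Set E} (hfs : tsupport f ⊆ s)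
    (hf : ∀ x ∈ s, ContDiffAt 𝕜 n f x) : ContDiff 𝕜 n f := by
  refine contDiff_iff_contDiffAt.2 fun x => ?_
  by_cases hx : x ∈ tsupport f
  · exact hf x (hfs hx)
  · exact contDiffAt_const.congr_of_eventuallyEq (notMem_tsupport_iff_eventuallyEq.1 hx)

section NormedSpace

variable {E : Type*} [NormedAddCommGroup E] [NormedSpace ℝ E] {c : ℝ} {s : Set E} {u : E → ℝ}

theorem contDiff_smoothTruncation (hs : IsOpen s) (hu : ContinuousOn u (closure s))
    (hu₂ : ContDiffOn ℝ 2 u s) (hfr : ∀ x ∈ frontier s, u x < c) :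
    ContDiff ℝ 2 (smoothTruncation c s u) :=
  contDiff_of_tsupport_subset (tsupport_smoothTruncation_subset hs hu hfr) fun x hx =>
    ((contDiff_smoothRamp.comp (contDiff_id.sub contDiff_const)).contDiffAt.comp x
      (hu₂.contDiffAt (hs.mem_nhds hx))).congr_of_eventuallyEq
        (smoothTruncation_eventuallyEq c hs u hx)

theorem norm_fderiv_smoothTruncation_le (hs : IsOpen s) {x : E} (hx : x ∈ s)
    (hu : DifferentiableAt ℝ u x) : ‖fderiv ℝ (smoothTruncation c s u) x‖ ≤ ‖fderiv ℝ u x‖ := by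
  have hramp := ((hasDerivAt_smoothRamp (u x - c)).comp_sub_const).comp_hasFDerivAt x
    hu.hasFDerivAt
  rw [(hramp.congr_of_eventuallyEq (smoothTruncation_eventuallyEq c hs u hx)).fderiv, norm_smul,
    Real.norm_of_nonneg (Real.smoothTransition.nonneg _)]
  exact mul_le_of_le_one_left (norm_nonneg _) (Real.smoothTransition.le_one _)

theorem integral_sq_norm_fderiv_smoothTruncation_le [MeasurableSpace E] [BorelSpace E]
    {μ : Measure E} (hs : IsOpen s) (hu : ContinuousOn u (closure s))
    (hu₁ : DifferentiableOn ℝ u s) (hfr : ∀ x ∈ frontier s, u x < c)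
    (hint : IntegrableOn (fun x => ‖fderiv ℝ u x‖ ^ 2) s μ) :
    ∫ x, ‖fderiv ℝ (smoothTruncation c s u) x‖ ^ 2 ∂μ ≤ ∫ x in s, ‖fderiv ℝ u x‖ ^ 2 ∂μ := by
  have hzero : ∀ x ∉ s, ‖fderiv ℝ (smoothTruncation c s u) x‖ ^ 2 = 0 := fun x hx => by
    simp [fderiv_of_notMem_tsupport ℝ
      fun h => hx (tsupport_smoothTruncation_subset hs hu hfr h)]
  rw [← setIntegral_eq_integral_of_forall_compl_eq_zero hzero]
  refine integral_mono_of_nonneg (.of_forall fun x => by positivity) hint ?_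
  filter_upwards [ae_restrict_mem hs.measurableSet] with x hx
  gcongr
  exact norm_fderiv_smoothTruncation_le hs hx (hu₁.differentiableAt (hs.mem_nhds hx))

end NormedSpace

variable {E : Type*} [NormedAddCommGroup E] [InnerProductSpace ℝ E] [FiniteDimensional ℝ E] {c : ℝ}
  {s : Set E} {u : E → ℝ}

theorem laplacian_smoothTruncation (hs : IsOpen s) {x : E} (hx : x ∈ s) (hu : ContDiffAt ℝ 2 u x) :
    Δ (smoothTruncation c s u) x = deriv Real.smoothTransition (u x - c) * ‖∇ u x‖ ^ 2 +
      Real.smoothTransition (u x - c) * Δ u x := by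
  have hramp : ContDiff ℝ 2 fun t => smoothRamp (t - c) :=
    contDiff_smoothRamp.comp (contDiff_id.sub contDiff_const)
  have hderiv : deriv (fun t => smoothRamp (t - c)) = fun t => Real.smoothTransition (t - c) :=
    funext fun t => (hasDerivAt_smoothRamp (t - c)).comp_sub_const.deriv
  rw [(laplacian_congr_nhds (smoothTruncation_eventuallyEq c hs u hx)).eq_of_nhds,
    laplacian_comp hramp hu, hderiv, deriv_comp_sub_const]

theorem neg_add_rpow_le_laplacian_smoothTruncation (hc : 0 ≤ c)
    (hs : IsOpen s) (hu : ContinuousOn u (closure s)) (hu₂ : ContDiffOn ℝ 2 u s)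
    (hfr : ∀ x ∈ frontier s, u x < c) {r : ℝ} (hr : 0 ≤ r)
    (hΔ : ∀ x ∈ s, -(max (u x) 0) ^ r ≤ Δ u x) (x : E) :
    -(smoothTruncation c s u x + (c + 1)) ^ r ≤ Δ (smoothTruncation c s u) x := by
  have hf₀ := smoothTruncation_nonneg c s u x
  by_cases hx : x ∈ s
  · have hmax : (max (u x) 0) ^ r ≤ (smoothTruncation c s u x + (c + 1)) ^ r :=
      Real.rpow_le_rpow (le_max_right _ _)
        (max_le (le_smoothTruncation_add c u hx) (by positivity)) hr
    have hconvex := mul_nonneg (Real.smoothTransition.monotone.deriv_nonneg (x := u x - c))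
      (sq_nonneg ‖∇ u x‖)
    calc -(smoothTruncation c s u x + (c + 1)) ^ r ≤ -(max (u x) 0) ^ r := neg_le_neg hmax
      _ ≤ Real.smoothTransition (u x - c) * -(max (u x) 0) ^ r := by
        have := mul_le_of_le_one_left (Real.rpow_nonneg (le_max_right (u x) 0) r)
          (Real.smoothTransition.le_one (u x - c))
        linarith
      _ ≤ Real.smoothTransition (u x - c) * Δ u x :=
        mul_le_mul_of_nonneg_left (hΔ x hx) (Real.smoothTransition.nonneg _)
      _ ≤ Δ (smoothTruncation c s u) x := by
        rw [laplacian_smoothTruncation hs hx (hu₂.contDiffAt (hs.mem_nhds hx))]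
        linarith
  · have hzero : smoothTruncation c s u =ᶠ[𝓝 x] fun _ => 0 := notMem_tsupport_iff_eventuallyEq.1
      fun h => hx (tsupport_smoothTruncation_subset hs hu hfr h)
    rw [(laplacian_congr_nhds hzero).eq_of_nhds]
    simpa using Real.rpow_nonneg (by positivity) r

end Truncation

section SupremumBound

theorem integrableOn_sq_norm_gradient_of_lipschitzOnWith {E : Type*} [NormedAddCommGroup E]
    [InnerProductSpace ℝ E] [CompleteSpace E] [MeasurableSpace E] [OpensMeasurableSpace E]
    {μ : Measure E} {s : Set E} (hs : IsOpen s) (hμs : μ s ≠ ⊤) {L : NNReal} {u : E → ℝ}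
    (hu : LipschitzOnWith L u s) : IntegrableOn (fun x => ‖∇ u x‖ ^ 2) s μ := by
  simp only [norm_gradient_eq_norm_fderiv]
  have hmeas : Measurable fun x => ‖fderiv ℝ u x‖ := (measurable_fderiv ℝ u).norm
  refine IntegrableOn.of_bound hμs.lt_top (hmeas.pow_const 2).aestronglyMeasurable ((L : ℝ) ^ 2) ?_
  filter_upwards [ae_restrict_mem hs.measurableSet] with x hx
  rw [norm_pow, norm_norm]
  gcongr
  exact norm_fderiv_le_of_lipschitzOn ℝ (hs.mem_nhds hx) hu

theorem neg_max_rpow_le_sub_max_sub_one_rpow {b r : ℝ} (hb : 0 ≤ b) (hr : 0 ≤ r) (t : ℝ) :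
    -(max t 0) ^ r ≤ b - (max (t - 1) 0) ^ r := by
  have : (max (t - 1) 0) ^ r ≤ (max t 0) ^ r :=
    Real.rpow_le_rpow (le_max_right _ _) (max_le_max_right 0 (by linarith)) hr
  linarith

theorem stmt_7_general {E : Type*} [NormedAddCommGroup E] [InnerProductSpace ℝ E]
    [FiniteDimensional ℝ E] [MeasurableSpace E] [BorelSpace E] (μ : Measure E)
    [μ.IsAddHaarMeasure] (hE : 2 ≤ finrank ℝ E) {Ω : Set E} (hΩo : IsOpen Ω)
    (hΩb : Bornology.IsBounded Ω) {p : ℝ} (hp : 1 ≤ p)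
    (hp_sub : 3 ≤ finrank ℝ E → p < 2 * (finrank ℝ E : ℝ) / ((finrank ℝ E : ℝ) - 2)) (K : ℝ) :
    ∃ C > 0, ∀ u : E → ℝ, ContinuousOn u (closure Ω) → ContDiffOn ℝ 2 u Ω →
      (∀ x ∈ frontier Ω, u x ≤ 0) → (∀ x ∈ Ω, -(max (u x) 0) ^ (p - 1) ≤ Δ u x) →
      IntegrableOn (fun x => ‖∇ u x‖ ^ 2) Ω μ → ∫ x in Ω, ‖∇ u x‖ ^ 2 ∂μ ≤ K →
      ∀ x ∈ Ω, u x ≤ C := by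
  obtain ⟨C, hC⟩ := exists_forall_le_of_neg_add_rpow_le_laplacian (μ := μ) hE hΩb hp hp_sub
    (A := 1 + 1)
    (by norm_num) K
  refine ⟨max C 0 + 2, by positivity, fun u hu hu₂ hfr hΔ hint hK x hx => ?_⟩
  simp only [norm_gradient_eq_norm_fderiv] at hint hK
  replace hfr : ∀ x ∈ frontier Ω, u x < 1 := fun x hx => (hfr x hx).trans_lt one_pos
  have hbound : smoothTruncation 1 Ω u x ≤ C :=
    hC _ (contDiff_smoothTruncation hΩo hu hu₂ hfr) support_indicator_subset
      (smoothTruncation_nonneg 1 Ω u)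
      (neg_add_rpow_le_laplacian_smoothTruncation zero_le_one hΩo hu hu₂ hfr (sub_nonneg.2 hp) hΔ)
      ((integral_sq_norm_fderiv_smoothTruncation_le hΩo hu (hu₂.differentiableOn two_ne_zero) hfr
        hint).trans hK) x
  linarith [le_smoothTruncation_add 1 u hx, le_max_left C 0]

end SupremumBound

theorem stmt_7 {N : ℕ} (hN : 2 ≤ N) (Ω : Set (EuclideanSpace ℝ (Fin N)))
    (hΩo : IsOpen Ω) (hΩb : Bornology.IsBounded Ω) (p : ℝ) (hp : 2 < p)
    (hpSub : 3 ≤ N → p < 2 * (N : ℝ) / ((N : ℝ) - 2))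
    (β : ℝ → ℝ) (hβc : Continuous β) (hβ0 : ∀ s, 0 ≤ β s)
    (K : ℝ) (hK : 0 < K) :
    ∃ C > (0 : ℝ), ∀ ε : ℝ, ε ∈ Set.Ioc (0 : ℝ) 1 →
      ∀ u : EuclideanSpace ℝ (Fin N) → ℝ,
        (∃ L : NNReal, LipschitzOnWith L u (closure Ω)) →
        ContDiffOn ℝ 2 u Ω →
        (∀ x ∈ frontier Ω, u x = 0) →
        (∀ x ∈ Ω, lap u x
          = (1 / ε) * β ((u x - 1) / ε) - (max (u x - 1) 0) ^ (p - 1)) →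
        (∫ x in Ω, ‖gradient u x‖ ^ 2) ≤ K →
        ∀ x ∈ Ω, u x ≤ C := by
  obtain ⟨C, hC₀, hC⟩ := stmt_7_general volume (by simpa using hN) hΩo hΩb (by linarith : 1 ≤ p)
    (by simpa using hpSub) K
  refine ⟨C, hC₀, fun ε hε u ⟨L, hL⟩ hu hfr hlap hgrad =>
    hC u hL.continuousOn hu (fun x hx => (hfr x hx).le) (fun x hx => ?_)
      (integrableOn_sq_norm_gradient_of_lipschitzOnWith hΩo hΩb.measure_lt_top.ne
        (hL.mono subset_closure)) hgrad⟩
  rw [← lap_eq_laplacian (hu.contDiffAt (hΩo.mem_nhds hx)), hlap x hx]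
  exact neg_max_rpow_le_sub_max_sub_one_rpow
    (mul_nonneg (one_div_nonneg.2 hε.1.le) (hβ0 _)) (by linarith) _
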